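/- Let 𝔄 be a normed *-algebra with commuting derivations ∂₁,…,∂_d. For each n ∈ ℕ, the seminorm ‖a‖_n = ∑_{|α| ≤ n} ‖∂^α a‖ / α! is submultiplicative: ‖ab‖_n ≤ ‖a‖_n ‖b‖_n. -/

import Mathlib

/-- Iterated application ∂^α = ∂₁^{α₁} ⋯ ∂_d^{α_d} of a family of additive maps. -/
def iterD {A : Type*} [Ring A] {d : ℕ} (D : Fin d → AddMonoid.End A)
    (α : Fin d → ℕ) : AddMonoid.End A :=
  (List.ofFn (fun i => (D i) ^ (α i))).prod

/-- The seminorm ‖a‖_n = ∑_{|α| ≤ n} ‖∂^α a‖ / α!. -/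
noncomputable def diffSeminorm {A : Type*} [NormedRing A] {d : ℕ}
    (D : Fin d → AddMonoid.End A) (n : ℕ) (a : A) : ℝ :=
  ∑ α ∈ (Fintype.piFinset fun _ : Fin d => Finset.range (n + 1)).filter
      (fun α => ∑ i, α i ≤ n),
    ‖iterD D α a‖ / (∏ i, Nat.factorial (α i) : ℕ)


theorem iterD_succ {A : Type*} [Ring A] {d : ℕ} (D : Fin (d+1) → AddMonoid.End A)
    (α : Fin (d+1) → ℕ) (a : A) :
    iterD D α a = ((D 0) ^ (α 0)) (iterD (fun i => D i.succ) (fun i => α i.succ) a) := by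
  simp [iterD, List.ofFn_succ]

theorem leib_pow {A : Type*} [Ring A] (D : AddMonoid.End A)
    (h : ∀ (a b : A), D (a * b) = D a * b + a * D b) (k : ℕ) (a b : A) :
    (D ^ k) (a * b) = ∑ p ∈ Finset.HasAntidiagonal.antidiagonal k,
      (k.choose p.1) • ((D ^ p.1) a * (D ^ p.2) b) := by
  have hmul : ∀ (f g : AddMonoid.End A) (x : A), (f * g) x = f (g x) := fun _ _ _ => rfl
  induction k with
  | zero => simp
  | succ k ih =>
    rw [Finset.sum_antidiagonal_choose_succ_nsmul
      (fun i j => (D ^ i) a * (D ^ j) b) k]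
    rw [pow_succ', hmul, ih, map_sum, ← Finset.sum_add_distrib]
    refine Finset.sum_congr rfl fun p hp => ?_
    rw [map_nsmul, h, smul_add, pow_succ', pow_succ', hmul,
      hmul, add_comm]
    rw [Finset.HasAntidiagonal.mem_antidiagonal] at hp
    rw [Nat.choose_symm_of_eq_add hp.symm]

theorem leib_multi {A : Type*} [Ring A] {d : ℕ} (D : Fin d → AddMonoid.End A)
    (hleib : ∀ i (a b : A), D i (a * b) = D i a * b + a * D i b)
    (α : Fin d → ℕ) (a b : A) :
    iterD D α (a * b) = ∑ p ∈ Fintype.piFinset (fun i => Finset.HasAntidiagonal.antidiagonal (α i)),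
      (∏ i, (α i).choose (p i).1) •
        (iterD D (fun i => (p i).1) a * iterD D (fun i => (p i).2) b) := by
  induction d with
  | zero => simp [iterD]
  | succ d ih =>
    rw [iterD_succ, ih _ (fun i => hleib i.succ), map_sum]
    simp only [map_nsmul, leib_pow (D 0) (hleib 0), Finset.smul_sum, iterD_succ D]
    rw [← Finset.sum_product']
    refine Finset.sum_bij' (fun x _ => (Fin.cons x.2 x.1 : Fin (d+1) → ℕ × ℕ))
      (fun p _ => (fun i => p i.succ, p 0)) ?_ ?_ ?_ ?_ ?_
    · intro x hx
      simp only [Finset.mem_product, Fintype.mem_piFinset] at hx ⊢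
      intro i
      refine Fin.cases ?_ (fun j => ?_) i
      · simpa using hx.2
      · simpa using hx.1 j
    · intro p hp
      simp only [Finset.mem_product, Fintype.mem_piFinset] at hp ⊢
      exact ⟨fun i => hp _, hp 0⟩
    · intro x hx
      simp
    · intro p hp
      exact Fin.cons_self_tail p
    · intro x hx
      simp only [Fin.cons_zero, Fin.cons_succ, Fin.prod_univ_succ, smul_smul]
      rw [mul_comm]

theorem norm_multi {A : Type*} [NormedRing A] {d : ℕ} (D : Fin d → AddMonoid.End A)
    (hleib : ∀ i (a b : A), D i (a * b) = D i a * b + a * D i b)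
    (α : Fin d → ℕ) (a b : A) :
    ‖iterD D α (a * b)‖ / (∏ i, Nat.factorial (α i) : ℕ) ≤
      ∑ p ∈ Fintype.piFinset (fun i => Finset.HasAntidiagonal.antidiagonal (α i)),
      (‖iterD D (fun i => (p i).1) a‖ / (∏ i, Nat.factorial (p i).1 : ℕ)) *
        (‖iterD D (fun i => (p i).2) b‖ / (∏ i, Nat.factorial (p i).2 : ℕ)) := by
  have hpos : ∀ f : Fin d → ℕ, (0 : ℝ) < (∏ i, Nat.factorial (f i) : ℕ) := fun f => by
    exact_mod_cast Finset.prod_pos fun i _ => Nat.factorial_pos _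
  rw [leib_multi D hleib, div_le_iff₀ (hpos α), Finset.sum_mul]
  refine (norm_sum_le _ _).trans (Finset.sum_le_sum fun p hp => ?_)
  have key : (∏ i, (α i).choose (p i).1) * (∏ i, Nat.factorial (p i).1) *
      (∏ i, Nat.factorial (p i).2) = ∏ i, Nat.factorial (α i) := by
    rw [← Finset.prod_mul_distrib, ← Finset.prod_mul_distrib]
    refine Finset.prod_congr rfl fun i _ => ?_
    have := Finset.HasAntidiagonal.mem_antidiagonal.1 (Fintype.mem_piFinset.1 hp i)
    rw [← this]
    rw [Nat.choose_symm_add]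
    exact Nat.add_choose_mul_factorial_mul_factorial _ _
  refine (norm_nsmul_le).trans ?_
  have h1 := hpos fun i => (p i).1
  have h2 := hpos fun i => (p i).2
  rw [← key, Nat.cast_mul, Nat.cast_mul]
  calc _ ≤ ((∏ i, (α i).choose (p i).1 : ℕ) : ℝ) *
        (‖iterD D (fun i => (p i).1) a‖ * ‖iterD D (fun i => (p i).2) b‖) := by
        gcongr
        exact norm_mul_le _ _
    _ = _ := by
        field_simp

/-- for commuting derivations ∂₁,…,∂_d on a normed algebra, the
seminorm ‖a‖_n = ∑_{|α| ≤ n} ‖∂^α a‖/α! is submultiplicative. -/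
theorem stmt10 {A : Type*} [NormedRing A] {d : ℕ} (D : Fin d → AddMonoid.End A)
    (hleib : ∀ i (a b : A), D i (a * b) = D i a * b + a * D i b)
    (hcomm : ∀ i j, D i * D j = D j * D i)
    (n : ℕ) (a b : A) :
    diffSeminorm D n (a * b) ≤ diffSeminorm D n a * diffSeminorm D n b := by
  unfold diffSeminorm
  refine (Finset.sum_le_sum fun α _ => norm_multi D hleib α a b).trans ?_
  rw [Finset.sum_mul_sum, ← Finset.sum_product', Finset.sum_sigma']
  have hS : ∀ α : Fin d → ℕ, α ∈ (Fintype.piFinset fun _ : Fin d =>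
      Finset.range (n + 1)).filter (fun α => ∑ i, α i ≤ n) ↔ ∑ i, α i ≤ n := by
    intro α
    simp only [Finset.mem_filter, Fintype.mem_piFinset, Finset.mem_range, and_iff_right_iff_imp]
    intro h i
    have := Finset.single_le_sum (f := α) (fun _ _ => Nat.zero_le _) (Finset.mem_univ i)
    omega
  let e : (Σ _ : Fin d → ℕ, Fin d → ℕ × ℕ) → (Fin d → ℕ) × (Fin d → ℕ) :=
    fun x => (fun i => (x.2 i).1, fun i => (x.2 i).2)
  have hinj : Set.InjOn e ((((Fintype.piFinset fun _ : Fin d =>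
      Finset.range (n + 1)).filter (fun α => ∑ i, α i ≤ n)).sigma fun α =>
        Fintype.piFinset (fun i => Finset.HasAntidiagonal.antidiagonal (α i)) :
        Finset (Σ _ : Fin d → ℕ, Fin d → ℕ × ℕ)) : Set _) := by
    rintro ⟨α, p⟩ hx ⟨β, q⟩ hy hxy
    simp only [Finset.coe_sigma, Set.mem_sigma_iff, Finset.mem_coe, Fintype.mem_piFinset,
      Finset.HasAntidiagonal.mem_antidiagonal] at hx hy
    have hpq : p = q := by
      funext i
      exact Prod.ext (congrFun (congrArg Prod.fst hxy) i) (congrFun (congrArg Prod.snd hxy) i)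
    subst hpq
    have hab : α = β := by
      funext i
      rw [← hx.2 i, ← hy.2 i]
    subst hab
    rfl
  rw [← Finset.sum_image (f := fun x : (Fin d → ℕ) × (Fin d → ℕ) =>
    ‖iterD D x.1 a‖ / ((∏ i, Nat.factorial (x.1 i) : ℕ) : ℝ) *
      (‖iterD D x.2 b‖ / ((∏ i, Nat.factorial (x.2 i) : ℕ) : ℝ))) hinj]
  refine Finset.sum_le_sum_of_subset_of_nonneg ?_ fun _ _ _ => by positivity
  intro y hy
  obtain ⟨⟨α, p⟩, hx, rfl⟩ := Finset.mem_image.1 hy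
  rw [Finset.mem_sigma, hS] at hx
  rw [Finset.mem_product, hS, hS]
  obtain ⟨h1, h2⟩ := hx
  simp only [Fintype.mem_piFinset, Finset.HasAntidiagonal.mem_antidiagonal] at h1 h2
  exact ⟨(Finset.sum_le_sum fun i _ => by have := h2 i; simp only [e]; omega).trans h1,
    (Finset.sum_le_sum fun i _ => by have := h2 i; simp only [e]; omega).trans h1⟩
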